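/- Let h : R → R be locally Lipschitz with |h(z) − h(z̃)| ≤ L(1 + |z| + |z̃|)|z − z̃| and ‖h(Z)‖_{ψ₁} ≤ L for Z ~ N(0,1). For any 0 < ε ≤ 1/2, if m ≥ C ε⁻² log(1/ε) n then with probability at least 1 − 3 exp(−c ε² m), |(1/m) Σ_j h(a_j^T u) − E h(Z)| ≤ ε uniformly over all unit vectors u ∈ R^n. -/

import Mathlib

open MeasureTheory ProbabilityTheory

noncomputable def stdGaussianMat (m n : ℕ) : Measure (Fin m → Fin n → ℝ) :=
  Measure.pi fun _ => Measure.pi fun _ => gaussianReal 0 1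

theorem card_le_of_norm_one_of_separated {E : Type*} [NormedAddCommGroup E] [NormedSpace ℝ E]
    [FiniteDimensional ℝ E] {δ : ℝ} (hδ : 0 < δ) (hδ1 : δ ≤ 1) (s : Finset E)
    (hs : ∀ c ∈ s, ‖c‖ = 1) (h : ∀ c ∈ s, ∀ d ∈ s, c ≠ d → δ < ‖c - d‖) :
    (s.card : ℝ) ≤ (3 / δ) ^ Module.finrank ℝ E := by
  borelize E
  let μ : Measure E := Measure.addHaar
  have hδ2 : 0 < δ / 2 := by positivity
  have hdisj : (s : Set E).Pairwise (Function.onFun Disjoint fun c => Metric.ball c (δ / 2)) := by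
    intro c hc d hd hcd
    apply Metric.ball_disjoint_ball
    rw [dist_eq_norm]
    linarith [h c hc d hd hcd]
  have hsub : (⋃ c ∈ s, Metric.ball c (δ / 2)) ⊆ Metric.ball (0 : E) (3 / 2) := by
    refine Set.iUnion₂_subset fun x hx => Metric.ball_subset_ball' ?_
    rw [dist_zero_right, hs x hx]
    linarith
  have hvol : (s.card : ENNReal) * ENNReal.ofReal ((δ / 2) ^ Module.finrank ℝ E)
        * μ (Metric.ball 0 1)
      ≤ ENNReal.ofReal ((3 / 2) ^ Module.finrank ℝ E) * μ (Metric.ball 0 1) := by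
    calc _ = μ (⋃ c ∈ s, Metric.ball c (δ / 2)) := by
          rw [measure_biUnion_finset hdisj fun c _ => measurableSet_ball]
          simp only [μ.addHaar_ball_of_pos _ hδ2, Finset.sum_const, nsmul_eq_mul, mul_assoc]
      _ ≤ μ (Metric.ball (0 : E) (3 / 2)) := measure_mono hsub
      _ = _ := by rw [μ.addHaar_ball_of_pos _ (by norm_num)]
  have hcard : (s.card : ENNReal) * ENNReal.ofReal ((δ / 2) ^ Module.finrank ℝ E)
      ≤ ENNReal.ofReal ((3 / 2) ^ Module.finrank ℝ E) :=
    (ENNReal.mul_le_mul_iff_left (Metric.measure_ball_pos _ _ zero_lt_one).ne'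
      measure_ball_lt_top.ne).1 hvol
  have hreal := ENNReal.toReal_le_of_le_ofReal (by positivity) hcard
  rw [ENNReal.toReal_mul, ENNReal.toReal_natCast, ENNReal.toReal_ofReal (by positivity)] at hreal
  rwa [← le_div_iff₀ (by positivity), ← div_pow, div_div_div_cancel_right₀ two_ne_zero] at hreal

theorem exists_finset_net_unit_sphere {E : Type*} [NormedAddCommGroup E] [NormedSpace ℝ E]
    [FiniteDimensional ℝ E] {δ : ℝ} (hδ : 0 < δ) (hδ1 : δ ≤ 1) :
    ∃ N : Finset E, (∀ v ∈ N, ‖v‖ = 1) ∧ (∀ u : E, ‖u‖ = 1 → ∃ v ∈ N, ‖u - v‖ ≤ δ) ∧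
      (N.card : ℝ) ≤ (3 / δ) ^ Module.finrank ℝ E := by
  classical
  let P : Finset E → Prop := fun s =>
    (∀ c ∈ s, ‖c‖ = 1) ∧ ∀ c ∈ s, ∀ d ∈ s, c ≠ d → δ < ‖c - d‖
  let S : Set ℕ := {k | ∃ s, P s ∧ s.card = k}
  have hne : S.Nonempty := ⟨0, ∅, by simp [P]⟩
  have hbdd : BddAbove S := by
    refine ⟨⌊(3 / δ) ^ Module.finrank ℝ E⌋₊, ?_⟩
    rintro _ ⟨s, hs, rfl⟩
    exact Nat.le_floor (card_le_of_norm_one_of_separated hδ hδ1 s hs.1 hs.2)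
  obtain ⟨N, hN, hNcard⟩ := Nat.sSup_mem hne hbdd
  refine ⟨N, hN.1, fun u hu => ?_, card_le_of_norm_one_of_separated hδ hδ1 N hN.1 hN.2⟩
  by_contra! hfar
  have huN : u ∉ N := fun hmem => by simpa using (hfar u hmem).trans' hδ
  have hins : P (insert u N) := by
    refine ⟨?_, ?_⟩
    · simpa [hu] using hN.1
    · intro c hc d hd hcd
      rcases Finset.mem_insert.1 hc with rfl | hcN <;> rcases Finset.mem_insert.1 hd with rfl | hdN
      · exact absurd rfl hcd
      · exact hfar d hdN
      · rw [norm_sub_rev]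
        exact hfar c hcN
      · exact hN.2 c hcN d hdN hcd
  have hle := le_csSup hbdd ⟨insert u N, hins, rfl⟩
  rw [Finset.card_insert_of_notMem huN] at hle
  omega

theorem map_sum_mul_pi_gaussianReal {ι : Type*} [Fintype ι] (u : ι → ℝ)
    (hu : ∑ i, (u i) ^ 2 = 1) :
    (Measure.pi fun _ : ι => gaussianReal 0 1).map (fun x => ∑ i, x i * u i)
      = gaussianReal 0 1 := by
  have hmeas : Measurable fun x : ι → ℝ => ∑ i, x i * u i := by fun_prop
  have := Measure.isProbabilityMeasure_map (μ := Measure.pi fun _ : ι => gaussianReal 0 1)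
    hmeas.aemeasurable
  refine Measure.ext_of_charFun (funext fun t => ?_)
  rw [charFun_apply_real, integral_map hmeas.aemeasurable (by fun_prop)]
  have hprod : ∀ x : ι → ℝ, Complex.exp (t * ((∑ i, x i * u i : ℝ) : ℂ) * Complex.I)
      = ∏ i, Complex.exp (((t * u i : ℝ) : ℂ) * (x i : ℂ) * Complex.I) := by
    intro x
    rw [← Complex.exp_sum]
    push_cast
    rw [Finset.mul_sum, Finset.sum_mul]
    congr 1
    exact Finset.sum_congr rfl fun i _ => by ring
  simp_rw [hprod]
  rw [integral_fintype_prod_eq_prod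
    (f := fun i (x : ℝ) => Complex.exp (((t * u i : ℝ) : ℂ) * (x : ℂ) * Complex.I))]
  simp_rw [← charFun_apply_real, charFun_gaussianReal]
  rw [← Complex.exp_sum]
  congr 1
  have hu' : ∑ i, (u i : ℂ) ^ 2 = 1 := by exact_mod_cast hu
  simp only [Complex.ofReal_zero, mul_zero, zero_mul, NNReal.coe_one, Complex.ofReal_one, one_mul,
    zero_sub, Complex.ofReal_mul, mul_pow, Finset.sum_neg_distrib, ← Finset.sum_div,
    ← Finset.mul_sum, hu', mul_one]

theorem stdGaussianMat_real_sum_ge_le {m n : ℕ} {u : Fin n → ℝ} (hu : ∑ i, (u i) ^ 2 = 1)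
    {f : ℝ → ℝ} (hf : Measurable f)
    (hint : Integrable (fun z => Real.exp (f z)) (gaussianReal 0 1)) {κ : ℝ}
    (hκ : ∫ z, Real.exp (f z) ∂(gaussianReal 0 1) ≤ Real.exp κ) (t : ℝ) :
    (stdGaussianMat m n).real {a | t ≤ ∑ j, f (∑ i, a j i * u i)}
      ≤ Real.exp (m * κ - t) := by
  have hmeas : Measurable fun x : Fin n → ℝ => ∑ i, x i * u i := by fun_prop
  have hlaw := map_sum_mul_pi_gaussianReal u hu
  have hrow_int : Integrable (fun x : Fin n → ℝ => Real.exp (f (∑ i, x i * u i)))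
      (Measure.pi fun _ => gaussianReal 0 1) := by
    rw [← hlaw] at hint
    exact hint.comp_measurable hmeas
  have hrow : ∫ x : Fin n → ℝ, Real.exp (f (∑ i, x i * u i))
      ∂(Measure.pi fun _ => gaussianReal 0 1) ≤ Real.exp κ := by
    rw [← hlaw, integral_map hmeas.aemeasurable (by fun_prop)] at hκ
    exact hκ
  have : IsProbabilityMeasure (stdGaussianMat m n) := by
    unfold stdGaussianMat
    infer_instance
  have hexp : ∀ a : Fin m → Fin n → ℝ, Real.exp (1 * ∑ j, f (∑ i, a j i * u i))
      = ∏ j, Real.exp (f (∑ i, a j i * u i)) := fun a => by rw [one_mul, Real.exp_sum]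
  have hchernoff := measure_ge_le_exp_mul_mgf (μ := stdGaussianMat m n)
    (X := fun a => ∑ j, f (∑ i, a j i * u i)) t zero_le_one (by
      simp_rw [hexp]
      exact Integrable.fintype_prod fun _ => hrow_int)
  refine hchernoff.trans ?_
  rw [mgf]
  simp_rw [hexp]
  unfold stdGaussianMat
  rw [integral_fintype_prod_eq_prod
    (f := fun _ (x : Fin n → ℝ) => Real.exp (f (∑ i, x i * u i))), Finset.prod_const,
    Finset.card_univ, Fintype.card_fin, sub_eq_neg_add, Real.exp_add, Real.exp_nat_mul]
  simp only [neg_mul, one_mul]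
  gcongr

theorem stdGaussianMat_real_sum_ge_le_of_scaled {m n : ℕ} {u : Fin n → ℝ}
    (hu : ∑ i, (u i) ^ 2 = 1) {f : ℝ → ℝ} (hf : Measurable f) {l : ℝ} (hl : 0 < l)
    (hint : Integrable (fun z => Real.exp (l * f z)) (gaussianReal 0 1)) {κ : ℝ}
    (hκ : ∫ z, Real.exp (l * f z) ∂(gaussianReal 0 1) ≤ Real.exp κ) (t : ℝ) :
    (stdGaussianMat m n).real {a | t ≤ ∑ j, f (∑ i, a j i * u i)}
      ≤ Real.exp (m * κ - l * t) := by
  have hbd := stdGaussianMat_real_sum_ge_le (m := m) hu (hf.const_mul l) hint hκ (l * t)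
  simpa only [← Finset.mul_sum, mul_le_mul_iff_right₀ hl] using hbd

theorem exp_le_one_add_add_sq_mul_exp_abs (x : ℝ) :
    Real.exp x ≤ 1 + x + x ^ 2 * Real.exp |x| := by
  have hone : 1 ≤ Real.exp |x| := Real.one_le_exp (abs_nonneg x)
  rcases le_or_gt |x| 1 with hx | hx
  · have h1 := (le_abs_self _).trans (Real.abs_exp_sub_one_sub_id_le hx)
    nlinarith [sq_nonneg x]
  · rcases lt_abs.1 hx with hx | hx
    · rw [abs_of_pos (by linarith)]
      nlinarith [mul_nonneg (by nlinarith : 0 ≤ x ^ 2 - 1) (Real.exp_pos x).le]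
    · have h1 : Real.exp x ≤ 1 := Real.exp_le_one_iff.2 (by linarith)
      nlinarith [sq_nonneg x]

theorem exists_integrable_exp_mul_sq_gaussianReal :
    ∃ s > 0, Integrable (fun z : ℝ => Real.exp (s * z ^ 2)) (gaussianReal 0 1) := by
  obtain ⟨s, hs, hint⟩ := IsGaussian.exists_integrable_exp_sq (gaussianReal 0 1)
  exact ⟨s, hs, by simpa using hint⟩

theorem continuous_of_locally_lipschitz_bound {L : ℝ} {h : ℝ → ℝ}
    (hh : ∀ z z' : ℝ, |h z - h z'| ≤ L * (1 + |z| + |z'|) * |z - z'|) : Continuous h := by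
  refine continuous_iff_continuousAt.2 fun x => ?_
  refine tendsto_iff_dist_tendsto_zero.2 ?_
  have hlim : Filter.Tendsto (fun z => L * (1 + |z| + |x|) * |z - x|) (nhds x) (nhds 0) := by
    have hc : Continuous fun z => L * (1 + |z| + |x|) * |z - x| := by fun_prop
    simpa using hc.tendsto x
  exact squeeze_zero (fun _ => dist_nonneg) (fun z => by simpa [Real.dist_eq] using hh z x) hlim

theorem integrable_one_add_sq_gaussianReal :
    Integrable (fun z : ℝ => 1 + z ^ 2) (gaussianReal 0 1) := by
  have := (memLp_id_gaussianReal (μ := 0) (v := 1) 2).integrable_sq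
  simp only [id] at this
  exact (integrable_const 1).add this

theorem abs_sub_integral_le_mul_one_add_sq {L : ℝ} (hL : 0 < L) {h : ℝ → ℝ}
    (hh : ∀ z z' : ℝ, |h z - h z'| ≤ L * (1 + |z| + |z'|) * |z - z'|) :
    Integrable h (gaussianReal 0 1) ∧ ∀ z, |h z - ∫ x, h x ∂(gaussianReal 0 1)|
      ≤ 2 * L * (1 + ∫ x, (1 + x ^ 2) ∂(gaussianReal 0 1)) * (1 + z ^ 2) := by
  have hcont := continuous_of_locally_lipschitz_bound hh
  have hgrow : ∀ z, |h z - h 0| ≤ 2 * L * (1 + z ^ 2) := by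
    intro z
    refine (hh z 0).trans ?_
    simp only [abs_zero, add_zero, sub_zero]
    have : (1 + |z|) * |z| ≤ 2 * (1 + z ^ 2) := by
      nlinarith [sq_abs z, sq_nonneg (|z| - 1), abs_nonneg z]
    nlinarith
  have hdom : Integrable (fun z : ℝ => 2 * L * (1 + z ^ 2)) (gaussianReal 0 1) :=
    integrable_one_add_sq_gaussianReal.const_mul _
  have hint0 : Integrable (fun z => h z - h 0) (gaussianReal 0 1) :=
    hdom.mono' (by fun_prop) (.of_forall hgrow)
  have hint : Integrable h (gaussianReal 0 1) :=
    (hint0.add (integrable_const (h 0))).congr (.of_forall fun z => by simp)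
  refine ⟨hint, fun z => ?_⟩
  set I := ∫ x : ℝ, (1 + x ^ 2) ∂(gaussianReal 0 1) with hI
  have hmean : |(∫ x, h x ∂(gaussianReal 0 1)) - h 0| ≤ 2 * L * I := by
    have heq : (∫ x, h x ∂(gaussianReal 0 1)) - h 0 = ∫ x, (h x - h 0) ∂(gaussianReal 0 1) := by
      rw [integral_sub hint (integrable_const _)]
      simp
    rw [heq, hI, ← integral_const_mul]
    exact norm_integral_le_of_norm_le hdom (.of_forall fun z =>
      (Real.norm_eq_abs _).trans_le (hgrow z))
  have hI0 : 0 ≤ I := integral_nonneg fun x => by positivity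
  have htri : |h z - ∫ x, h x ∂(gaussianReal 0 1)|
      ≤ |h z - h 0| + |(∫ x, h x ∂(gaussianReal 0 1)) - h 0| := by
    rw [abs_sub_comm (∫ x, h x ∂(gaussianReal 0 1)) (h 0)]
    exact abs_sub_le _ _ _
  have : 0 ≤ 2 * L * I * z ^ 2 := by positivity
  linarith [hgrow z]

theorem exists_integral_exp_mul_centered_le (L : ℝ) (hL : 0 < L) :
    ∃ K > 0, ∃ l₀ > 0, ∀ h : ℝ → ℝ,
      (∀ z z' : ℝ, |h z - h z'| ≤ L * (1 + |z| + |z'|) * |z - z'|) → ∀ l : ℝ, |l| ≤ l₀ →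
      Integrable (fun z => Real.exp (l * (h z - ∫ x, h x ∂(gaussianReal 0 1))))
        (gaussianReal 0 1) ∧
      ∫ z, Real.exp (l * (h z - ∫ x, h x ∂(gaussianReal 0 1))) ∂(gaussianReal 0 1)
        ≤ Real.exp (K * l ^ 2) := by
  obtain ⟨s, hs, hsint⟩ := exists_integrable_exp_mul_sq_gaussianReal
  set B := 2 * L * (1 + ∫ x : ℝ, (1 + x ^ 2) ∂(gaussianReal 0 1)) with hB
  have hBpos : 0 < B := by
    have : 0 ≤ ∫ x : ℝ, (1 + x ^ 2) ∂(gaussianReal 0 1) := integral_nonneg fun x => by positivity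
    positivity
  clear_value B
  set G : ℝ → ℝ := fun z => B ^ 2 * (16 / s ^ 2) * (Real.exp s * Real.exp (s * z ^ 2)) with hG
  have hGint : Integrable G (gaussianReal 0 1) := (hsint.const_mul _).const_mul _
  have hK0 : 0 ≤ ∫ z, G z ∂(gaussianReal 0 1) := integral_nonneg fun z => by positivity
  refine ⟨(∫ z, G z ∂(gaussianReal 0 1)) + 1, by positivity, s / (2 * B), by positivity,
    fun h hh l hl => ?_⟩
  obtain ⟨hint, hbound⟩ := abs_sub_integral_le_mul_one_add_sq hL hh
  have hcont := continuous_of_locally_lipschitz_bound hh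
  set E := ∫ x, h x ∂(gaussianReal 0 1) with hE
  rw [← hB] at hbound
  have hpt : ∀ z, Real.exp (l * (h z - E)) ≤ 1 + l * (h z - E) + l ^ 2 * G z := by
    intro z
    refine (exp_le_one_add_add_sq_mul_exp_abs _).trans ?_
    rw [mul_pow, mul_assoc]
    gcongr
    have hy : 0 < 1 + z ^ 2 := by positivity
    have hexp : |l * (h z - E)| ≤ s / 2 * (1 + z ^ 2) := by
      rw [abs_mul]
      calc |l| * |h z - E| ≤ s / (2 * B) * (B * (1 + z ^ 2)) := by
            gcongr
            exact hbound z
        _ = s / 2 * (1 + z ^ 2) := by field_simp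
    have hsq : (h z - E) ^ 2 ≤ (B * (1 + z ^ 2)) ^ 2 := by
      rw [← sq_abs]
      gcongr
      exact hbound z
    have hlin : 1 + z ^ 2 ≤ 4 / s * Real.exp (s / 4 * (1 + z ^ 2)) := by
      have := Real.add_one_le_exp (s / 4 * (1 + z ^ 2))
      calc 1 + z ^ 2 = 4 / s * (s / 4 * (1 + z ^ 2)) := by field_simp
        _ ≤ _ := by
          gcongr
          linarith
    calc (h z - E) ^ 2 * Real.exp |l * (h z - E)|
        ≤ (B * (4 / s * Real.exp (s / 4 * (1 + z ^ 2)))) ^ 2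
            * Real.exp (s / 2 * (1 + z ^ 2)) := by
          have hsq' := hsq.trans (b := (B * (1 + z ^ 2)) ^ 2)
            (c := (B * (4 / s * Real.exp (s / 4 * (1 + z ^ 2)))) ^ 2) (by gcongr)
          exact mul_le_mul hsq' (Real.exp_le_exp.2 hexp) (Real.exp_pos _).le (sq_nonneg _)
      _ = G z := by
          have h1 : Real.exp (s / 4 * (1 + z ^ 2)) ^ 2 = Real.exp (s / 2 * (1 + z ^ 2)) := by
            rw [← Real.exp_nat_mul]
            push_cast
            congr 1
            ring
          have h2 : Real.exp s * Real.exp (s * z ^ 2)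
              = Real.exp (s / 2 * (1 + z ^ 2)) * Real.exp (s / 2 * (1 + z ^ 2)) := by
            rw [← Real.exp_add, ← Real.exp_add]
            congr 1
            ring
          rw [hG]
          simp only
          rw [h2, mul_pow, mul_pow, h1]
          ring
  have hcent : Integrable (fun z => h z - E) (gaussianReal 0 1) := hint.sub (integrable_const _)
  have hlin : Integrable (fun z => 1 + l * (h z - E)) (gaussianReal 0 1) :=
    (integrable_const _).add (hcent.const_mul l)
  have hdom : Integrable (fun z => 1 + l * (h z - E) + l ^ 2 * G z) (gaussianReal 0 1) :=
    hlin.add (hGint.const_mul _)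
  have hexpint : Integrable (fun z => Real.exp (l * (h z - E))) (gaussianReal 0 1) :=
    hdom.mono' (by fun_prop) (.of_forall fun z => by
      rw [Real.norm_of_nonneg (Real.exp_pos _).le]
      exact hpt z)
  refine ⟨hexpint, (integral_mono hexpint hdom hpt).trans ?_⟩
  rw [integral_add hlin (hGint.const_mul _), integral_add (integrable_const _) (hcent.const_mul l),
    integral_const_mul, integral_const_mul, integral_sub hint (integrable_const _)]
  simp only [integral_const, probReal_univ, smul_eq_mul, one_mul, ← hE, sub_self, mul_zero,
    add_zero]
  have := Real.add_one_le_exp (((∫ z, G z ∂(gaussianReal 0 1)) + 1) * l ^ 2)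
  nlinarith [sq_nonneg l]

theorem ContinuousLinearMap.opNorm_le_two_mul_of_net {E F : Type*} [NormedAddCommGroup E]
    [NormedSpace ℝ E] [NormedAddCommGroup F] [NormedSpace ℝ F] (A : E →L[ℝ] F) {N : Set E}
    (hN : ∀ u : E, ‖u‖ = 1 → ∃ v ∈ N, ‖u - v‖ ≤ 1 / 2) {R : ℝ} (hR : 0 ≤ R)
    (hA : ∀ v ∈ N, ‖A v‖ ≤ R) : ‖A‖ ≤ 2 * R := by
  have hunit : ‖A‖ ≤ R + ‖A‖ / 2 := by
    refine A.opNorm_le_of_unit_norm (by positivity) fun u hu => ?_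
    obtain ⟨v, hv, huv⟩ := hN u hu
    calc ‖A u‖ = ‖A v + A (u - v)‖ := by rw [← map_add, add_sub_cancel]
      _ ≤ ‖A v‖ + ‖A‖ * ‖u - v‖ := (norm_add_le _ _).trans (by gcongr; exact A.le_opNorm _)
      _ ≤ R + ‖A‖ * (1 / 2) := by
        gcongr
        exact hA v hv
      _ = _ := by ring
  linarith

theorem abs_sum_sub_sum_le_of_locally_lipschitz {ι : Type*} [Fintype ι] {L : ℝ} (hL : 0 ≤ L)
    {h : ℝ → ℝ} (hh : ∀ z z' : ℝ, |h z - h z'| ≤ L * (1 + |z| + |z'|) * |z - z'|)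
    {δ S : ℝ} (hδ : 0 < δ) (x y : ι → ℝ) (hx : ∑ j, (x j) ^ 2 ≤ S) (hy : ∑ j, (y j) ^ 2 ≤ S)
    (hxy : ∑ j, (x j - y j) ^ 2 ≤ δ ^ 2 * S) :
    |∑ j, h (x j) - ∑ j, h (y j)| ≤ L * δ / 2 * (3 * Fintype.card ι + 7 * S) := by
  rw [← Finset.sum_sub_distrib]
  refine (Finset.abs_sum_le_sum_abs _ _).trans ?_
  have hterm : ∀ j, |h (x j) - h (y j)|
      ≤ L * δ / 2 * (3 * (1 + x j ^ 2 + y j ^ 2)) + L / (2 * δ) * (x j - y j) ^ 2 := by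
    intro j
    refine (hh _ _).trans ?_
    have hsq : (1 + |x j| + |y j|) ^ 2 ≤ 3 * (1 + x j ^ 2 + y j ^ 2) := by
      rw [← sq_abs (x j), ← sq_abs (y j)]
      nlinarith [sq_nonneg (1 - |x j|), sq_nonneg (1 - |y j|), sq_nonneg (|x j| - |y j|)]
    have hamgm : (1 + |x j| + |y j|) * |x j - y j|
        ≤ δ / 2 * (1 + |x j| + |y j|) ^ 2 + 1 / (2 * δ) * (x j - y j) ^ 2 := by
      rw [← sq_abs (x j - y j)]
      have hkey : 0 ≤ 1 / (2 * δ) * (δ * (1 + |x j| + |y j|) - |x j - y j|) ^ 2 := by positivity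
      have heq : 1 / (2 * δ) * (δ * (1 + |x j| + |y j|) - |x j - y j|) ^ 2
          = δ / 2 * (1 + |x j| + |y j|) ^ 2 + 1 / (2 * δ) * |x j - y j| ^ 2
            - (1 + |x j| + |y j|) * |x j - y j| := by
        field_simp
        ring
      linarith
    calc L * (1 + |x j| + |y j|) * |x j - y j| = L * ((1 + |x j| + |y j|) * |x j - y j|) := by ring
      _ ≤ L * (δ / 2 * (3 * (1 + x j ^ 2 + y j ^ 2)) + 1 / (2 * δ) * (x j - y j) ^ 2) := by
        gcongr
        refine hamgm.trans ?_
        gcongr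
      _ = _ := by ring
  refine (Finset.sum_le_sum fun j _ => hterm j).trans ?_
  rw [Finset.sum_add_distrib, ← Finset.mul_sum, ← Finset.mul_sum, ← Finset.mul_sum,
    Finset.sum_add_distrib, Finset.sum_add_distrib]
  simp only [Finset.sum_const, Finset.card_univ, nsmul_eq_mul, mul_one]
  calc _ ≤ L * δ / 2 * (3 * (Fintype.card ι + S + S)) + L / (2 * δ) * (δ ^ 2 * S) := by gcongr
    _ = _ := by
      field_simp
      ring

theorem abs_average_sub_le_of_net {m n : ℕ} (hm : 0 < m) {L : ℝ} (hL : 0 ≤ L) {h : ℝ → ℝ}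
    (hh : ∀ z z' : ℝ, |h z - h z'| ≤ L * (1 + |z| + |z'|) * |z - z'|)
    {δ T : ℝ} (hδ : 0 < δ) (hδ2 : δ ≤ 1 / 2) (hT : 0 ≤ T) {N : Set (EuclideanSpace ℝ (Fin n))}
    (hN : ∀ u : EuclideanSpace ℝ (Fin n), ‖u‖ = 1 → ∃ v ∈ N, ‖u - v‖ ≤ δ)
    (hN1 : ∀ v ∈ N, ‖v‖ = 1) (a : Fin m → Fin n → ℝ)
    (ha : ∀ v ∈ N, ∑ j, (∑ i, a j i * v i) ^ 2 ≤ T * m) {E η : ℝ}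
    (hE : ∀ v ∈ N, |∑ j, h (∑ i, a j i * v i) - m * E| ≤ m * η)
    (u : Fin n → ℝ) (hu : ∑ i, (u i) ^ 2 = 1) :
    |(1 / (m : ℝ)) * ∑ j, h (∑ i, a j i * u i) - E| ≤ η + L * δ / 2 * (3 + 28 * T) := by
  let A : EuclideanSpace ℝ (Fin n) →L[ℝ] EuclideanSpace ℝ (Fin m) :=
    (Matrix.toEuclideanLin (Matrix.of a)).toContinuousLinearMap
  have hAapp : ∀ (w : EuclideanSpace ℝ (Fin n)) j, A w j = ∑ i, a j i * w i := by
    intro w j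
    simp [A, Matrix.toLpLin_apply, Matrix.mulVec, dotProduct]
  have hnorm : ∀ w : EuclideanSpace ℝ (Fin n), ∑ j, (∑ i, a j i * w i) ^ 2 = ‖A w‖ ^ 2 := by
    intro w
    rw [EuclideanSpace.real_norm_sq_eq]
    simp_rw [hAapp]
  have hop : ‖A‖ ≤ 2 * √(T * m) := by
    refine A.opNorm_le_two_mul_of_net (N := N) (fun u hu => ?_) (Real.sqrt_nonneg _) fun v hv => ?_
    · obtain ⟨v, hv, huv⟩ := hN u hu
      exact ⟨v, hv, huv.trans hδ2⟩
    · exact Real.le_sqrt_of_sq_le (hnorm v ▸ ha v hv)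
  have hop2 : ‖A‖ ^ 2 ≤ 4 * T * m := by
    calc ‖A‖ ^ 2 ≤ (2 * √(T * m)) ^ 2 := by gcongr
      _ = 4 * T * m := by
        rw [mul_pow, Real.sq_sqrt (by positivity)]
        ring
  have hAsq : ∀ w r, ‖w‖ ≤ r → ‖A w‖ ^ 2 ≤ r ^ 2 * (4 * T * m) := by
    intro w r hw
    calc ‖A w‖ ^ 2 ≤ (‖A‖ * ‖w‖) ^ 2 := by
          gcongr
          exact A.le_opNorm w
      _ = ‖w‖ ^ 2 * ‖A‖ ^ 2 := by ring
      _ ≤ r ^ 2 * (4 * T * m) := by gcongr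
  let U : EuclideanSpace ℝ (Fin n) := WithLp.toLp 2 u
  have hU : ‖U‖ = 1 := by
    rw [← sq_eq_sq₀ (norm_nonneg _) zero_le_one, EuclideanSpace.real_norm_sq_eq]
    simpa [U] using hu
  obtain ⟨v, hv, huv⟩ := hN U hU
  have hdiff := abs_sum_sub_sum_le_of_locally_lipschitz hL hh (S := 4 * T * m) hδ
    (fun j => ∑ i, a j i * U i) (fun j => ∑ i, a j i * v i)
    (by
      rw [hnorm U]
      simpa using hAsq U 1 hU.le)
    (by
      rw [hnorm v]
      simpa using hAsq v 1 (hN1 v hv).le)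
    (by
      have heq : ∀ j, ∑ i, a j i * U i - ∑ i, a j i * v i = ∑ i, a j i * (U - v) i := by
        intro j
        simp [mul_sub, Finset.sum_sub_distrib]
      simp_rw [heq]
      rw [hnorm]
      exact hAsq _ _ huv)
  rw [Fintype.card_fin] at hdiff
  have hm' : (0 : ℝ) < m := by exact_mod_cast hm
  have htri : |∑ j, h (∑ i, a j i * u i) - m * E|
      ≤ m * (η + L * δ / 2 * (3 + 28 * T)) := by
    refine (abs_sub_le _ (∑ j, h (∑ i, a j i * v i)) _).trans ?_
    refine (add_le_add hdiff (hE v hv)).trans (le_of_eq ?_)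
    ring
  have heq : (1 / (m : ℝ)) * ∑ j, h (∑ i, a j i * u i) - E
      = (∑ j, h (∑ i, a j i * u i) - m * E) / m := by
    field_simp
  rw [heq, abs_div, abs_of_pos hm', div_le_iff₀ hm']
  linarith

theorem compl_uniformly_close_subset_biUnion_net {m n : ℕ} (hm : 0 < m) {L : ℝ} (hL : 0 ≤ L)
    {h : ℝ → ℝ}
    (hh : ∀ z z' : ℝ, |h z - h z'| ≤ L * (1 + |z| + |z'|) * |z - z'|)
    {δ T : ℝ} (hδ : 0 < δ) (hδ2 : δ ≤ 1 / 2) (hT : 0 ≤ T) {N : Finset (EuclideanSpace ℝ (Fin n))}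
    (hN : ∀ u : EuclideanSpace ℝ (Fin n), ‖u‖ = 1 → ∃ v ∈ N, ‖u - v‖ ≤ δ)
    (hN1 : ∀ v ∈ N, ‖v‖ = 1) {E η ε : ℝ} (hε : η + L * δ / 2 * (3 + 28 * T) ≤ ε) :
    {a : Fin m → Fin n → ℝ | ∀ u : Fin n → ℝ, ∑ i, (u i) ^ 2 = 1 →
        |(1 / (m : ℝ)) * ∑ j, h (∑ i, a j i * u i) - E| ≤ ε}ᶜ
      ⊆ ⋃ v ∈ N, ({a | T * m ≤ ∑ j, (∑ i, a j i * v i) ^ 2} ∪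
          {a | m * η ≤ ∑ j, (h (∑ i, a j i * v i) - E)} ∪
          {a | m * η ≤ ∑ j, -(h (∑ i, a j i * v i) - E)}) := by
  intro a ha
  by_contra hnot
  simp only [Set.mem_iUnion, Set.mem_union, Set.mem_ofPred_eq, not_exists, not_or, not_le] at hnot
  refine ha fun u hu => le_trans ?_ hε
  refine abs_average_sub_le_of_net hm hL hh hδ hδ2 hT (N := N) hN hN1 a
    (fun v hv => (hnot v hv).1.1.le) (fun v hv => ?_) u hu
  obtain ⟨⟨-, h1⟩, h2⟩ := hnot v hv
  simp only [Finset.sum_neg_distrib, Finset.sum_sub_distrib, Finset.sum_const, Finset.card_univ,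
    Fintype.card_fin, nsmul_eq_mul] at h1 h2
  exact abs_le.2 ⟨by linarith, by linarith⟩

theorem one_sub_le_measure_of_measureReal_compl_le {α : Type*} [MeasurableSpace α] {μ : Measure α}
    [IsProbabilityMeasure μ] {s : Set α} {r : ℝ} (h : μ.real sᶜ ≤ r) :
    ENNReal.ofReal (1 - r) ≤ μ s := by
  have huniv : (1 : ℝ) ≤ μ.real s + μ.real sᶜ := by
    rw [← probReal_univ (μ := μ), ← Set.union_compl_self s]
    exact measureReal_union_le _ _
  rw [← ofReal_measureReal (μ := μ) (s := s)]
  exact ENNReal.ofReal_le_ofReal (by linarith)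

/-- Uniform concentration for Lipschitz sub-exponential functions of Gaussian
projections: if `h` is locally Lipschitz with `|h(z) − h(z̃)| ≤ L(1+|z|+|z̃|)|z−z̃|`
and `‖h(Z)‖_{ψ₁} ≤ L`, then for `0 < ε ≤ 1/2` and `m ≥ C ε⁻² log(1/ε) n`, with
probability at least `1 − 3exp(−c ε² m)`, `|(1/m)∑ⱼ h(aⱼᵀu) − E h(Z)| ≤ ε` for all
unit `u`. -/
theorem uniform_concentration_lipschitz :
    ∀ L : ℝ, 0 < L → ∃ C > (0 : ℝ), ∃ c > (0 : ℝ), ∀ h : ℝ → ℝ,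
      (∀ z z' : ℝ, |h z - h z'| ≤ L * (1 + |z| + |z'|) * |z - z'|) →
      (∫ z, Real.exp (|h z| / L) ∂(gaussianReal 0 1) ≤ 2) →
      ∀ ε : ℝ, 0 < ε → ε ≤ 1 / 2 → ∀ n m : ℕ,
      (m : ℝ) ≥ C * ε⁻¹ ^ 2 * Real.log (1 / ε) * n →
      stdGaussianMat m n {a | ∀ u : Fin n → ℝ, ∑ i, (u i) ^ 2 = 1 →
          |(1 / (m : ℝ)) * ∑ j, h (∑ i, a j i * u i)
            - ∫ z, h z ∂(gaussianReal 0 1)| ≤ ε}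
        ≥ ENNReal.ofReal (1 - 3 * Real.exp (-(c * ε ^ 2 * m))) := by
  intro L hL
  obtain ⟨K, hK, l₀, hl₀, hmgf⟩ := exists_integral_exp_mul_centered_le L hL
  obtain ⟨s, hs, hsint⟩ := exists_integrable_exp_mul_sq_gaussianReal
  set κ := ∫ z : ℝ, Real.exp (s * z ^ 2) ∂(gaussianReal 0 1)
  have hκ0 : 0 ≤ κ := integral_nonneg fun z => (Real.exp_pos _).le
  set T := (κ + 1) / s with hT
  have hT0 : 0 < T := by positivity
  set r := 1 / (L * (3 + 28 * T) + 1) with hr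
  have hr0 : 0 < r := by positivity
  have hr1 : r ≤ 1 := by
    rw [hr, div_le_one (by positivity)]
    have : 0 < L * (3 + 28 * T) := by positivity
    linarith
  set l₁ := min l₀ (1 / (4 * K))
  have hl₁0 : 0 < l₁ := by positivity
  have hl₁K : K * l₁ ≤ 1 / 4 := by
    calc K * l₁ ≤ K * (1 / (4 * K)) := by
          gcongr
          exact min_le_right _ _
      _ = 1 / 4 := by field_simp
  set c := min (l₁ / 4) 1
  have hc0 : 0 < c := by positivity
  have hlog2 : 0 < Real.log 2 := Real.log_pos one_lt_two
  have hlogr : 0 ≤ Real.log (3 / r) :=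
    Real.log_nonneg ((one_le_div hr0).2 (by linarith))
  set D := 1 + Real.log (3 / r) / Real.log 2 with hD
  have hD0 : 0 < D := by positivity
  refine ⟨2 * D / c, by positivity, c / 2, by positivity, ?_⟩
  intro h hh _ ε hε hε2 n m hmn
  have hprob : IsProbabilityMeasure (stdGaussianMat m n) := by
    unfold stdGaussianMat
    infer_instance
  refine one_sub_le_measure_of_measureReal_compl_le ?_
  rcases Nat.eq_zero_or_pos n with rfl | hn
  · simp only [Finset.univ_eq_empty, Finset.sum_empty, zero_ne_one, IsEmpty.forall_iff,
      implies_true, Set.ofPred_true, Set.compl_univ, measureReal_empty]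
    positivity
  have hlogε : Real.log 2 ≤ Real.log (1 / ε) := by
    apply Real.log_le_log two_pos
    rw [le_div_iff₀ hε]
    linarith
  have hlogε0 : 0 < Real.log (1 / ε) := hlog2.trans_le hlogε
  have hm : 0 < m := by
    have : (0 : ℝ) < m := lt_of_lt_of_le (by positivity) hmn
    exact_mod_cast this
  set E := ∫ z, h z ∂(gaussianReal 0 1)
  have hcont := continuous_of_locally_lipschitz_bound hh
  have hδ : 0 < r * ε := by positivity
  have hδ2 : r * ε ≤ 1 / 2 := by nlinarith
  obtain ⟨N, hN1, hN, hNcard⟩ :=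
    exists_finset_net_unit_sphere (E := EuclideanSpace ℝ (Fin n)) hδ (by linarith)
  rw [finrank_euclideanSpace_fin] at hNcard
  have happrox : ε / 2 + L * (r * ε) / 2 * (3 + 28 * T) ≤ ε := by
    have hden : r * (L * (3 + 28 * T) + 1) = 1 := by
      rw [hr]
      field_simp
    nlinarith [mul_pos hr0 hε]
  have hone : ∀ v ∈ N, ∑ i, (v i) ^ 2 = 1 := fun v hv => by
    rw [← EuclideanSpace.real_norm_sq_eq, hN1 v hv, one_pow]
  have htail_sq : ∀ v ∈ N, (stdGaussianMat m n).real
      {a | T * m ≤ ∑ j, (∑ i, a j i * v i) ^ 2} ≤ Real.exp (-(c * ε ^ 2 * m)) := by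
    intro v hv
    refine (stdGaussianMat_real_sum_ge_le_of_scaled (hone v hv) (f := fun z => z ^ 2)
      (by fun_prop) hs hsint (κ := κ) (by linarith [Real.add_one_le_exp κ]) _).trans
      (Real.exp_le_exp.2 ?_)
    have hsT : s * T = κ + 1 := by
      rw [hT]
      field_simp
    have hcε : c * ε ^ 2 ≤ 1 :=
      mul_le_one₀ (min_le_right _ _) (sq_nonneg ε) (pow_le_one₀ hε.le (by linarith))
    calc m * κ - s * (T * m) = -(1 * m) := by
          rw [← mul_assoc, hsT]
          ring
      _ ≤ -(c * ε ^ 2 * m) := by gcongr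
  have htail : ∀ σ : ℝ, |σ| = 1 → ∀ v ∈ N, (stdGaussianMat m n).real
      {a | m * (ε / 2) ≤ ∑ j, σ * (h (∑ i, a j i * v i) - E)} ≤ Real.exp (-(c * ε ^ 2 * m)) := by
    intro σ hσ v hv
    have hl : |l₁ * ε * σ| ≤ l₀ := by
      rw [abs_mul, hσ, mul_one, abs_of_pos (by positivity)]
      exact (mul_le_of_le_one_right hl₁0.le (by linarith)).trans (min_le_left _ _)
    obtain ⟨hint, hle⟩ := hmgf h hh _ hl
    refine (stdGaussianMat_real_sum_ge_le_of_scaled (hone v hv) (f := fun z => σ * (h z - E))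
      (by fun_prop) (mul_pos hl₁0 hε) (by simpa only [mul_assoc] using hint)
      (by simpa only [mul_assoc] using hle) _).trans (Real.exp_le_exp.2 ?_)
    have hσ2 : σ ^ 2 = 1 := by rw [← sq_abs, hσ, one_pow]
    rw [mul_pow, mul_pow, hσ2, mul_one]
    have hcl : c ≤ l₁ / 4 := min_le_left _ _
    calc m * (K * (l₁ ^ 2 * ε ^ 2)) - l₁ * ε * (m * (ε / 2))
        = (K * l₁ - 1 / 2) * l₁ * (ε ^ 2 * m) := by ring
      _ ≤ (1 / 4 - 1 / 2) * l₁ * (ε ^ 2 * m) := by gcongr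
      _ = -(l₁ / 4 * (ε ^ 2 * m)) := by ring
      _ ≤ -(c * (ε ^ 2 * m)) := by gcongr
      _ = -(c * ε ^ 2 * m) := by ring
  have hcard : (N.card : ℝ) ≤ Real.exp (c / 2 * ε ^ 2 * m) := by
    refine hNcard.trans ?_
    rw [← Real.exp_log (show 0 < 3 / (r * ε) by positivity), ← Real.exp_nat_mul]
    apply Real.exp_le_exp.2
    have hlog : Real.log (3 / (r * ε)) ≤ D * Real.log (1 / ε) := by
      have hsplit : 3 / (r * ε) = 3 / r * (1 / ε) := by field_simp
      rw [hsplit, Real.log_mul (by positivity) (by positivity), hD, add_mul, one_mul, add_comm]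
      gcongr
      rw [div_mul_eq_mul_div, le_div_iff₀ hlog2]
      gcongr
    calc (n : ℝ) * Real.log (3 / (r * ε)) ≤ n * (D * Real.log (1 / ε)) := by gcongr
      _ = c / 2 * ε ^ 2 * (2 * D / c * ε⁻¹ ^ 2 * Real.log (1 / ε) * n) := by field_simp
      _ ≤ c / 2 * ε ^ 2 * m := by gcongr
  have hsub := compl_uniformly_close_subset_biUnion_net (E := E) hm hL.le hh hδ hδ2 hT0.le hN
    hN1 happrox
  refine (measureReal_mono hsub (measure_ne_top _ _)).trans ?_
  refine (measureReal_biUnion_finset_le _ _).trans ?_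
  calc _ ≤ ∑ _v ∈ N, 3 * Real.exp (-(c * ε ^ 2 * m)) := by
        refine Finset.sum_le_sum fun v hv => ?_
        refine (measureReal_union_le _ _).trans ?_
        have h2 := htail 1 abs_one v hv
        have h3 := htail (-1) (by simp) v hv
        simp only [one_mul, neg_one_mul] at h2 h3
        linarith [htail_sq v hv, measureReal_union_le (μ := stdGaussianMat m n)
          {a | T * m ≤ ∑ j, (∑ i, a j i * v i) ^ 2}
          {a | m * (ε / 2) ≤ ∑ j, (h (∑ i, a j i * v i) - E)}]
    _ ≤ Real.exp (c / 2 * ε ^ 2 * m) * (3 * Real.exp (-(c * ε ^ 2 * m))) := by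
        rw [Finset.sum_const, nsmul_eq_mul]
        gcongr
    _ = 3 * Real.exp (-(c / 2 * ε ^ 2 * m)) := by
        rw [mul_left_comm, ← Real.exp_add]
        congr 2
        ring
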